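/- Assume 0 < γ ≤ 1 (and γ < p), let u be a local minimizer of J on Ω, and let z₊ ∈ Ω be a one-phase free boundary point: z₊ ∈ ∂{x ∈ Ω : u(x) > 0} but z₊ ∉ ∂{x ∈ Ω : u(x) < 0}. Assume: (growth) there exist ρ₀ > 0 and C₂ > 0 with B_{ρ₀}(z₊) ⊆ Ω and sup_{B_r(z₊)} |u| ≤ C₂ r^{1+τ} for all 0 < r < ρ₀; and (interior Lipschitz estimate) there exists L > 0 such that for every 0 < r < ρ₀/2 and every y ∈ B_r(z₊), one has ‖∇u(x)‖ ≤ L r^τ for all x ∈ B_{r/2}(y). Then there exist c₁ ∈ (0,1), depending only on N, p, γ, λ₊, C₂ and L, and ρ₁ ∈ (0, ρ₀) such that for every 0 < r < ρ₁: 𝓛^N({x : u(x) > 0} ∩ B_r(z₊)) ≥ c₁ · 𝓛^N(B_r(z₊)). -/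

import Mathlib

open MeasureTheory Metric Set
open scoped InnerProductSpace

/-- The Alt–Phillips potential `F_γ(t) = λ₊ (t₊)^γ + λ₋ (t₋)^γ`. -/
noncomputable def Fgam (γ lp lm : ℝ) (t : ℝ) : ℝ :=
  lp * (max t 0) ^ γ + lm * (max (-t) 0) ^ γ

/-- `u` is a `C¹(Ω)` function with `∫_Ω ‖∇u‖^p < ∞` which is a local minimizer of the
functional with density `‖∇v‖^p/p + F(v)`, with respect to Lipschitz competitors on
balls compactly contained in `Ω` agreeing with `u` on the boundary sphere. -/
def APLocMin (N : ℕ) (p : ℝ) (F : ℝ → ℝ) (Ω : Set (EuclideanSpace ℝ (Fin N)))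
    (u : EuclideanSpace ℝ (Fin N) → ℝ) : Prop :=
  (∀ x ∈ Ω, DifferentiableAt ℝ u x) ∧
  ContinuousOn (fun x => gradient u x) Ω ∧
  IntegrableOn (fun x => ‖gradient u x‖ ^ p) Ω volume ∧
  ∀ (z : EuclideanSpace ℝ (Fin N)) (r : ℝ), 0 < r → closure (Metric.ball z r) ⊆ Ω →
    ∀ (v : EuclideanSpace ℝ (Fin N) → ℝ) (K : NNReal),
      LipschitzOnWith K v (closure (Metric.ball z r)) →
      Set.EqOn v u (Metric.sphere z r) →
      (∫ x in Metric.ball z r, (‖gradient u x‖ ^ p / p + F (u x))) ≤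
        ∫ x in Metric.ball z r, (‖gradient v x‖ ^ p / p + F (v x))

/-!
Let `q` be the exponent conjugate to `p`. The radial barrier `W` vanishing at `y` has constant
`p`-Laplacian `N c`, and on the sphere of radius `r` it reaches the height `ε r ^ (1 + τ)`, where
`c` is small compared with the slope of `F_γ` on `[0, ε r ^ (1 + τ)]` once `ε` is small. If `u ≥ 0`
stayed below that height on the ball around a point `y` with `u y > 0`, then `min u W` would be a
competitor of strictly smaller energy: the gradient term costs at most `N c ∫ (u - W)⁺` and the
potential gains more. Hence `u` exceeds `ε r ^ (1 + τ)` somewhere within distance `r` of every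
point of positivity, and the gradient bound `L r ^ τ` keeps `u` positive on a ball of radius
proportional to `r` around the point where this happens.
-/

open Filter Module Topology

section Real

lemma mul_rpow_sub_one_mul_sub_le_rpow_sub_rpow {γ s t M : ℝ} (hγ0 : 0 ≤ γ) (hγ1 : γ ≤ 1)
    (hs : 0 ≤ s) (hst : s ≤ t) (htM : t ≤ M) :
    γ * M ^ (γ - 1) * (t - s) ≤ t ^ γ - s ^ γ := by
  rcases (hs.trans hst).eq_or_lt with rfl | ht
  · simp [le_antisymm hst hs]
  have bernoulli : (s / t) ^ γ ≤ 1 + γ * (s / t - 1) := by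
    simpa using rpow_one_add_le_one_add_mul_self (s := s / t - 1)
      (by linarith [div_nonneg hs ht.le]) hγ0 hγ1
  calc γ * M ^ (γ - 1) * (t - s) ≤ γ * t ^ (γ - 1) * (t - s) := by
        have := Real.rpow_le_rpow_of_nonpos ht htM (by linarith : γ - 1 ≤ 0)
        have := sub_nonneg.2 hst
        gcongr
    _ = t ^ γ - (1 + γ * (s / t - 1)) * t ^ γ := by
        rw [Real.rpow_sub_one ht.ne']
        field_simp
        ring
    _ ≤ t ^ γ - s ^ γ := by
        rw [Real.div_rpow hs ht.le, div_le_iff₀ (by positivity)] at bernoulli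
        gcongr

lemma exists_pos_mul_rpow_lt (a : ℝ) {b s : ℝ} (hb : 0 < b) (hs : 0 < s) :
    ∃ ε : ℝ, 0 < ε ∧ a * ε ^ s < b := by
  have hcont : Continuous fun ε : ℝ => a * ε ^ s :=
    continuous_const.mul (Real.continuous_rpow_const hs.le)
  have hlt : ∀ᶠ ε in 𝓝 (0 : ℝ), a * ε ^ s < b :=
    hcont.continuousAt.eventually_lt_const (by simpa [Real.zero_rpow hs.ne'] using hb)
  obtain ⟨ε, hε, hε_pos⟩ := ((hlt.filter_mono nhdsWithin_le_nhds).and self_mem_nhdsWithin).exists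
    (f := 𝓝[>] (0 : ℝ))
  exact ⟨ε, hε_pos, hε⟩

end Real

section DualityMap

variable {E : Type*} [NormedAddCommGroup E] [InnerProductSpace ℝ E] {p q : ℝ}

/-- The gradient of `‖·‖ ^ q / q`. For conjugate exponents it inverts the `p`-Laplacian flux
`a ↦ ‖a‖ ^ (p - 2) • a`. -/
noncomputable def dualityMap (q : ℝ) (ξ : E) : E := ‖ξ‖ ^ (q - 2) • ξ

lemma norm_dualityMap (hq : 1 < q) (ξ : E) : ‖dualityMap q ξ‖ = ‖ξ‖ ^ (q - 1) := by
  rw [dualityMap, norm_smul, Real.norm_of_nonneg (by positivity),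
    ← Real.rpow_add_one' (norm_nonneg ξ) (by linarith)]
  ring_nf

lemma inner_dualityMap_self (hq : 1 < q) (ξ : E) : inner ℝ (dualityMap q ξ) ξ = ‖ξ‖ ^ q := by
  rw [dualityMap, real_inner_smul_left, real_inner_self_eq_norm_sq, ← Real.rpow_natCast,
    ← Real.rpow_add' (norm_nonneg ξ) (by norm_num; linarith)]
  norm_num

lemma dualityMap_smul (hq : 1 < q) {c : ℝ} (hc : 0 ≤ c) (ξ : E) :
    dualityMap q (c • ξ) = c ^ (q - 1) • dualityMap q ξ := by
  have hpow : c ^ (q - 1) = c ^ (q - 2) * c := by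
    rw [← Real.rpow_add_one' hc (by linarith)]
    ring_nf
  rw [dualityMap, dualityMap, norm_smul, Real.norm_of_nonneg hc,
    Real.mul_rpow hc (norm_nonneg ξ), smul_smul, smul_smul, hpow]
  ring_nf

lemma inner_le_norm_rpow_div_add_norm_rpow_div (hpq : p.HolderConjugate q) (a ξ : E) :
    inner ℝ a ξ ≤ ‖a‖ ^ p / p + ‖ξ‖ ^ q / q :=
  (real_inner_le_norm a ξ).trans
    (Real.young_inequality_of_nonneg (norm_nonneg a) (norm_nonneg ξ) hpq)

/-- Convexity of `‖·‖ ^ p / p` at `dualityMap q ξ`, where the gradient is `ξ`. -/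
lemma norm_dualityMap_rpow_div_le (hpq : p.HolderConjugate q) (a ξ : E) :
    ‖dualityMap q ξ‖ ^ p / p ≤ ‖a‖ ^ p / p - inner ℝ (a - dualityMap q ξ) ξ := by
  have hq := hpq.symm.lt
  have hnorm : ‖dualityMap q ξ‖ ^ p = ‖ξ‖ ^ q := by
    rw [norm_dualityMap hq, ← Real.rpow_mul (norm_nonneg ξ), hpq.symm.sub_one_mul_conj]
  have hsplit : ‖ξ‖ ^ q = ‖ξ‖ ^ q / p + ‖ξ‖ ^ q / q := by
    rw [div_eq_mul_inv, div_eq_mul_inv, ← mul_add, hpq.inv_add_inv_eq_one, mul_one]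
  rw [hnorm, inner_sub_left, inner_dualityMap_self hq]
  linarith [inner_le_norm_rpow_div_add_norm_rpow_div hpq a ξ]

end DualityMap

section RadialBarrier

variable {E : Type*} [NormedAddCommGroup E] {q c : ℝ}

/-- The radial function whose `p`-Laplacian flux is the field `x ↦ c • (x - y)`, so that its
`p`-Laplacian is the constant `c * dim E`; here `q` is the exponent conjugate to `p`. -/
noncomputable def radialBarrier (q c : ℝ) (y x : E) : ℝ := c ^ (q - 1) * ‖x - y‖ ^ q / q

lemma radialBarrier_nonneg (hq : 0 ≤ q) (hc : 0 ≤ c) (y x : E) : 0 ≤ radialBarrier q c y x := by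
  unfold radialBarrier
  positivity

lemma radialBarrier_self (hq : q ≠ 0) (y : E) : radialBarrier q c y y = 0 := by
  simp [radialBarrier, Real.zero_rpow hq]

variable [InnerProductSpace ℝ E]

lemma contDiff_radialBarrier (hq : 1 < q) (y : E) : ContDiff ℝ 1 (radialBarrier q c y) :=
  (contDiff_const.mul ((contDiff_id.sub contDiff_const).norm_rpow hq)).div_const q

lemma hasGradientAt_radialBarrier [CompleteSpace E] (hq : 1 < q) (hc : 0 ≤ c) (y x : E) :
    HasGradientAt (radialBarrier q c y) (dualityMap q (c • (x - y))) x := by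
  have hnorm : HasFDerivAt (fun x => ‖x - y‖ ^ q)
      ((q * ‖x - y‖ ^ (q - 2)) • innerSL ℝ (x - y)) x :=
    (hasFDerivAt_comp_sub y).2 (hasFDerivAt_norm_rpow (x - y) hq)
  rw [hasGradientAt_iff_hasFDerivAt, dualityMap_smul hq hc]
  refine ((hnorm.const_mul (c ^ (q - 1))).mul_const q⁻¹).congr_fderiv ?_
  ext w
  simp only [dualityMap, smul_apply, map_smul, innerSL_apply_apply,
    InnerProductSpace.toDual_apply_apply, smul_eq_mul]
  field_simp

lemma exists_lipschitzOnWith_radialBarrier [FiniteDimensional ℝ E] (hq : 1 < q) (y : E) (r : ℝ) :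
    ∃ K, LipschitzOnWith K (radialBarrier q c y) (closedBall y r) :=
  (contDiff_radialBarrier hq y).contDiffOn.exists_lipschitzOnWith one_ne_zero
    (convex_closedBall y r) (isCompact_closedBall y r)

end RadialBarrier

section Gradient

variable {E : Type*} [NormedAddCommGroup E] [InnerProductSpace ℝ E] [CompleteSpace E]
  {f g : E → ℝ} {x : E}

lemma gradient_fun_sub (hf : DifferentiableAt ℝ f x) (hg : DifferentiableAt ℝ g x) :
    gradient (fun t => f t - g t) x = gradient f x - gradient g x := by
  simp only [gradient, fderiv_fun_sub hf hg, map_sub]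

lemma gradient_eq_zero_of_isLocalMin (h : IsLocalMin f x) : gradient f x = 0 := by
  rw [gradient, h.fderiv_eq_zero, map_zero]

lemma norm_gradient_eq_norm_fderiv (f : E → ℝ) (x : E) : ‖gradient f x‖ = ‖fderiv ℝ f x‖ :=
  LinearIsometryEquiv.norm_map _ _

lemma inner_gradient_eq_sum_fderiv_mul_inner {ι : Type*} [Fintype ι] (e : OrthonormalBasis ι ℝ E)
    (g : E → ℝ) (x w : E) :
    inner ℝ (gradient g x) w = ∑ i, fderiv ℝ g x (e i) * inner ℝ (e i) w := by
  simp only [← e.sum_inner_mul_inner (gradient g x) w, inner_gradient_left]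

lemma norm_gradient_min_rpow_div_le {p q : ℝ} {u W : E → ℝ} {ξ : E} (hpq : p.HolderConjugate q)
    (hu : DifferentiableAt ℝ u x) (hW : HasGradientAt W (dualityMap q ξ) x)
    (hpos : DifferentiableAt ℝ (fun t => max (u t - W t) 0) x) :
    ‖gradient (fun t => min (u t) (W t)) x‖ ^ p / p ≤
      ‖gradient u x‖ ^ p / p - inner ℝ (gradient (fun t => max (u t - W t) 0) x) ξ := by
  rcases le_or_gt (u x) (W x) with hle | hlt
  · have hmin : (fun t => min (u t) (W t)) = fun t => u t - max (u t - W t) 0 := by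
      ext t
      rcases le_total (u t) (W t) with h | h <;> simp [h]
    have hzero : gradient (fun t => max (u t - W t) 0) x = 0 :=
      gradient_eq_zero_of_isLocalMin <| .of_forall fun t => by
        simp [max_eq_right (sub_nonpos.2 hle)]
    rw [hmin, gradient_fun_sub hu hpos, hzero, sub_zero, inner_zero_left, sub_zero]
  · have hlt' : ∀ᶠ t in 𝓝 x, W t < u t :=
      hW.continuousAt.eventually_lt hu.continuousAt hlt
    have hmin : (fun t => min (u t) (W t)) =ᶠ[𝓝 x] W :=
      hlt'.mono fun t ht => min_eq_right ht.le
    have hmax : (fun t => max (u t - W t) 0) =ᶠ[𝓝 x] fun t => u t - W t :=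
      hlt'.mono fun t ht => max_eq_left (sub_nonneg.2 ht.le)
    rw [hmin.gradient_eq, hmax.gradient_eq, gradient_fun_sub hu hW.differentiableAt, hW.gradient]
    exact norm_dualityMap_rpow_div_le hpq _ _

lemma eqOn_ball_gradient_indicator_closedBall (g : E → ℝ) (y : E) (r : ℝ) :
    EqOn (gradient ((closedBall y r).indicator g)) (gradient g) (ball y r) := fun _ hx =>
  EventuallyEq.gradient_eq <| eventually_of_mem (isOpen_ball.mem_nhds hx) fun _ ht =>
    indicator_of_mem (ball_subset_closedBall ht) g

lemma gradient_indicator_closedBall_of_notMem (g : E → ℝ) {y : E} {r : ℝ}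
    (hx : x ∉ closedBall y r) :
    gradient ((closedBall y r).indicator g) x = 0 := by
  have hzero : (closedBall y r).indicator g =ᶠ[𝓝 x] fun _ => 0 :=
    eventually_of_mem (isClosed_closedBall.isOpen_compl.mem_nhds hx) fun _ ht =>
      indicator_of_notMem ht g
  rw [hzero.gradient_eq, gradient_fun_const]

end Gradient

section ExtensionByZero

variable {E F : Type*} [NormedAddCommGroup E] [NormedSpace ℝ E] [NormedAddCommGroup F]
  {f : E → F} {K : NNReal}

lemma lipschitzWith_indicator_of_frontier_eq_zero {s : Set E} (hs : IsClosed s)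
    (hf : LipschitzOnWith K f s) (hzero : ∀ x ∈ frontier s, f x = 0) :
    LipschitzWith K (s.indicator f) := by
  have hcross : ∀ x ∈ s, ∀ t ∉ s, ‖f x‖ ≤ K * dist x t := by
    intro x hx t ht
    obtain ⟨w, hw_seg, hw⟩ : (segment ℝ x t ∩ frontier s).Nonempty := by
      rw [frontier_eq_closure_inter_closure]
      exact isPreconnected_closed_iff.1 (convex_segment x t).isPreconnected _ _ isClosed_closure
        isClosed_closure (fun w _ => (em (w ∈ s)).imp (subset_closure ·) (subset_closure ·))
        ⟨x, left_mem_segment ℝ x t, subset_closure hx⟩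
        ⟨t, right_mem_segment ℝ x t, subset_closure ht⟩
    calc ‖f x‖ = dist (f x) (f w) := by rw [hzero w hw, dist_zero_right]
      _ ≤ K * dist x w := hf.dist_le_mul x hx w (hs.frontier_subset hw)
      _ ≤ K * dist x t := by
        gcongr
        linarith [dist_add_dist_of_mem_segment hw_seg, dist_nonneg (x := w) (y := t)]
  refine LipschitzWith.of_dist_le_mul fun x t => ?_
  by_cases hx : x ∈ s <;> by_cases ht : t ∈ s
  · simpa [hx, ht] using hf.dist_le_mul x hx t ht
  · simpa [hx, ht] using hcross x hx t ht
  · simpa [hx, ht, dist_comm] using hcross t ht x hx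
  · simp only [indicator_of_notMem hx, indicator_of_notMem ht, dist_self]
    positivity

lemma lipschitzWith_indicator_closedBall {y : E} {r : ℝ} (hr : r ≠ 0)
    (hf : LipschitzOnWith K f (closedBall y r)) (hzero : ∀ x ∈ sphere y r, f x = 0) :
    LipschitzWith K ((closedBall y r).indicator f) :=
  lipschitzWith_indicator_of_frontier_eq_zero isClosed_closedBall hf
    (by rwa [frontier_closedBall y hr])

lemma hasCompactSupport_indicator_closedBall {α F : Type*} [PseudoMetricSpace α] [ProperSpace α]
    [Zero F] (f : α → F) (y : α) (r : ℝ) :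
    HasCompactSupport ((closedBall y r).indicator f) :=
  .intro (isCompact_closedBall y r) fun _ hx => indicator_of_notMem hx f

end ExtensionByZero

section Divergence

lemma closedBall_ae_eq_ball {E : Type*} [NormedAddCommGroup E] [NormedSpace ℝ E]
    [FiniteDimensional ℝ E] [MeasurableSpace E] [BorelSpace E] {μ : Measure E}
    [μ.IsAddHaarMeasure] (y : E) {r : ℝ} (hr : r ≠ 0) : closedBall y r =ᵐ[μ] ball y r := by
  have hnull := (convex_closedBall y r).addHaar_frontier μ
  simpa only [interior_closedBall y hr] using (interior_ae_eq_of_null_frontier hnull).symm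

lemma integrable_fderiv_mul {E : Type*} [NormedAddCommGroup E] [NormedSpace ℝ E]
    [MeasurableSpace E] [BorelSpace E] {μ : Measure E} [IsFiniteMeasureOnCompacts μ] {g : E → ℝ}
    {K : NNReal} (hg : LipschitzWith K g) (hcs : HasCompactSupport g) {ψ : E → ℝ}
    (hψ : Continuous ψ) (v : E) :
    Integrable (fun x => fderiv ℝ g x v * ψ x) μ := by
  have hbound : ∀ x, ‖fderiv ℝ g x v‖ ≤ K * ‖v‖ := fun x =>
    (fderiv ℝ g x).le_of_opNorm_le (norm_fderiv_le_of_lipschitz ℝ hg) v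
  have hsupp : Function.support (fun x => fderiv ℝ g x v * ψ x) ⊆ tsupport g := by
    intro x hx
    by_contra hx_supp
    exact hx (by simp [fderiv_of_notMem_tsupport ℝ hx_supp])
  have hint : IntegrableOn (fun x => fderiv ℝ g x v) (tsupport g) μ :=
    Measure.integrableOn_of_bounded hcs.isCompact.measure_lt_top.ne
      (measurable_fderiv_apply_const ℝ g v).aestronglyMeasurable (.of_forall hbound)
  exact (integrableOn_iff_integrable_of_support_subset hsupp).1
    (hint.mul_continuousOn hψ.continuousOn hcs.isCompact)

variable {E : Type*} [NormedAddCommGroup E] [InnerProductSpace ℝ E] [FiniteDimensional ℝ E]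
  [MeasurableSpace E] [BorelSpace E] {μ : Measure E} [μ.IsAddHaarMeasure]
  {g : E → ℝ} {K : NNReal} {r : ℝ}

lemma integral_fderiv_mul_inner_sub (hg : LipschitzWith K g) (hcs : HasCompactSupport g)
    (y v : E) :
    ∫ x, fderiv ℝ g x v * inner ℝ v (x - y) ∂μ = -(‖v‖ ^ 2 * ∫ x, g x ∂μ) := by
  have hlip : LipschitzWith ‖v‖₊ fun x => inner ℝ v (x - y) :=
    LipschitzWith.of_dist_le_mul fun a b => by
      rw [Real.dist_eq, ← inner_sub_right, sub_sub_sub_cancel_right, dist_eq_norm]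
      exact abs_real_inner_le_norm v (a - b)
  have hderiv : ∀ x, lineDeriv ℝ (fun x => inner ℝ v (x - y)) x v = ‖v‖ ^ 2 := by
    intro x
    have hline : (fun t : ℝ => inner ℝ v (x + t • v - y)) =
        fun t => t * ‖v‖ ^ 2 + inner ℝ v (x - y) := by
      ext t
      rw [add_sub_right_comm, inner_add_right, real_inner_smul_right, real_inner_self_eq_norm_sq,
        add_comm]
    rw [lineDeriv, hline]
    simp
  have hparts := hlip.integral_lineDeriv_mul_eq (μ := μ) hg hcs v
  simp only [hderiv, lineDeriv_neg, neg_mul, integral_neg, integral_const_mul] at hparts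
  have hline_eq : ∀ᵐ x ∂μ, fderiv ℝ g x v * inner ℝ v (x - y) =
      lineDeriv ℝ g x v * inner ℝ v (x - y) :=
    hg.ae_differentiableAt.mono fun x hx => by rw [hx.lineDeriv_eq_fderiv]
  rw [integral_congr_ae hline_eq, hparts, neg_neg]

lemma integrable_inner_gradient_sub (hg : LipschitzWith K g) (hcs : HasCompactSupport g) (y : E) :
    Integrable (fun x => inner ℝ (gradient g x) (x - y)) μ := by
  simp only [inner_gradient_eq_sum_fderiv_mul_inner (stdOrthonormalBasis ℝ E)]
  exact integrable_finsetSum _ fun i _ => integrable_fderiv_mul hg hcs (by fun_prop) _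

/-- The divergence theorem for `g` times the position field, whose divergence is `dim E`. -/
lemma integral_inner_gradient_sub (hg : LipschitzWith K g) (hcs : HasCompactSupport g) (y : E) :
    ∫ x, inner ℝ (gradient g x) (x - y) ∂μ = -(finrank ℝ E * ∫ x, g x ∂μ) := by
  simp only [inner_gradient_eq_sum_fderiv_mul_inner (stdOrthonormalBasis ℝ E)]
  rw [integral_finsetSum _ fun i _ => integrable_fderiv_mul hg hcs (by fun_prop) _]
  simp [integral_fderiv_mul_inner_sub hg hcs]

lemma integrableOn_ball_inner_gradient_sub {y : E} (hr : r ≠ 0)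
    (hg : LipschitzOnWith K g (closedBall y r)) (hzero : ∀ x ∈ sphere y r, g x = 0) :
    IntegrableOn (fun x => inner ℝ (gradient g x) (x - y)) (ball y r) μ := by
  have hint : IntegrableOn
      (fun x => inner ℝ (gradient ((closedBall y r).indicator g) x) (x - y)) (ball y r) μ :=
    (integrable_inner_gradient_sub (lipschitzWith_indicator_closedBall hr hg hzero)
      (hasCompactSupport_indicator_closedBall g y r) y).integrableOn
  refine hint.congr_fun (fun x hx => ?_) measurableSet_ball
  simp only [eqOn_ball_gradient_indicator_closedBall g y r hx]

lemma setIntegral_ball_inner_gradient_sub {y : E} (hr : r ≠ 0)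
    (hg : LipschitzOnWith K g (closedBall y r)) (hzero : ∀ x ∈ sphere y r, g x = 0) :
    ∫ x in ball y r, inner ℝ (gradient g x) (x - y) ∂μ =
      -(finrank ℝ E * ∫ x in ball y r, g x ∂μ) := by
  set G := (closedBall y r).indicator g with hG
  calc ∫ x in ball y r, inner ℝ (gradient g x) (x - y) ∂μ
      = ∫ x in ball y r, inner ℝ (gradient G x) (x - y) ∂μ :=
        setIntegral_congr_fun measurableSet_ball fun x hx => by
          simp only [hG, eqOn_ball_gradient_indicator_closedBall g y r hx]
    _ = ∫ x in closedBall y r, inner ℝ (gradient G x) (x - y) ∂μ :=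
        setIntegral_congr_set (closedBall_ae_eq_ball y hr).symm
    _ = ∫ x, inner ℝ (gradient G x) (x - y) ∂μ :=
        setIntegral_eq_integral_of_forall_compl_eq_zero fun x hx => by
          rw [gradient_indicator_closedBall_of_notMem g hx, inner_zero_left]
    _ = -(finrank ℝ E * ∫ x, G x ∂μ) :=
        integral_inner_gradient_sub (lipschitzWith_indicator_closedBall hr hg hzero)
          (hasCompactSupport_indicator_closedBall g y r) y
    _ = -(finrank ℝ E * ∫ x in ball y r, g x ∂μ) := by
        rw [hG, integral_indicator measurableSet_closedBall,
          setIntegral_congr_set (closedBall_ae_eq_ball y hr)]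

end Divergence

section EnergyComparison

/-- The density of the functional in `APLocMin`. -/
noncomputable def energyDensity {E : Type*} [NormedAddCommGroup E] [InnerProductSpace ℝ E]
    [CompleteSpace E] (p : ℝ) (F : ℝ → ℝ) (u : E → ℝ) (x : E) : ℝ :=
  ‖gradient u x‖ ^ p / p + F (u x)

lemma energyDensity_min_radialBarrier_le {E : Type*} [NormedAddCommGroup E]
    [InnerProductSpace ℝ E] [CompleteSpace E] {p q c κ : ℝ} {F : ℝ → ℝ} {u : E → ℝ} {x y : E}
    (hpq : p.HolderConjugate q) (hc : 0 ≤ c) (hu : DifferentiableAt ℝ u x)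
    (hpos : DifferentiableAt ℝ (fun t => max (u t - radialBarrier q c y t) 0) x)
    (hF : κ * max (u x - radialBarrier q c y x) 0 ≤
      F (u x) - F (min (u x) (radialBarrier q c y x))) :
    energyDensity p F (fun t => min (u t) (radialBarrier q c y t)) x ≤
      energyDensity p F u x -
        (c * inner ℝ (gradient (fun t => max (u t - radialBarrier q c y t) 0) x) (x - y) +
          κ * max (u x - radialBarrier q c y x) 0) := by
  have hgrad := norm_gradient_min_rpow_div_le hpq hu
    (hasGradientAt_radialBarrier hpq.symm.lt hc y x) hpos
  rw [real_inner_smul_right] at hgrad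
  simp only [energyDensity]
  linarith

variable {E : Type*} [NormedAddCommGroup E] [InnerProductSpace ℝ E] [FiniteDimensional ℝ E]
  [MeasurableSpace E] [BorelSpace E] {μ : Measure E} [μ.IsAddHaarMeasure]
  {p q c κ r : ℝ} {F : ℝ → ℝ} {u : E → ℝ} {y : E} {K : NNReal}

lemma ae_differentiableAt_ball_of_lipschitzOnWith (hu : LipschitzOnWith K u (closedBall y r)) :
    ∀ᵐ x ∂μ.restrict (ball y r), DifferentiableAt ℝ u x := by
  filter_upwards [ae_restrict_of_ae hu.ae_differentiableWithinAt_of_mem,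
    ae_restrict_mem measurableSet_ball] with x hdiff hx
  exact (hdiff (ball_subset_closedBall hx)).differentiableAt (closedBall_mem_nhds_of_mem hx)

/-- Cutting `u` down to the barrier lowers the energy: by convexity the gradient term drops by
at least `⟪∇(u - W)⁺, c • (x - y)⟫`, whose integral is `-c * dim E * ∫ (u - W)⁺`. -/
lemma setIntegral_energyDensity_min_add_le (hpq : p.HolderConjugate q) (hc : 0 ≤ c) (hr : r ≠ 0)
    (hu_lip : LipschitzOnWith K u (closedBall y r))
    (hu_diff : ∀ x ∈ ball y r, DifferentiableAt ℝ u x)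
    (hu_sphere : ∀ x ∈ sphere y r, u x ≤ radialBarrier q c y x)
    (hu_int : IntegrableOn (energyDensity p F u) (ball y r) μ)
    (hF_nonneg : ∀ x ∈ ball y r, 0 ≤ F (min (u x) (radialBarrier q c y x)))
    (hF_slope : ∀ x ∈ ball y r, κ * max (u x - radialBarrier q c y x) 0 ≤
      F (u x) - F (min (u x) (radialBarrier q c y x))) :
    ∫ x in ball y r, energyDensity p F (fun t => min (u t) (radialBarrier q c y t)) x ∂μ +
        (κ - finrank ℝ E * c) * ∫ x in ball y r, max (u x - radialBarrier q c y x) 0 ∂μ ≤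
      ∫ x in ball y r, energyDensity p F u x ∂μ := by
  set g : E → ℝ := fun x => max (u x - radialBarrier q c y x) 0
  set v : E → ℝ := fun x => min (u x) (radialBarrier q c y x)
  obtain ⟨K', hW_lip⟩ := exists_lipschitzOnWith_radialBarrier (c := c) hpq.symm.lt y r
  have hg_lip : LipschitzOnWith (1 * (K + K')) g (closedBall y r) :=
    (LipschitzWith.id.max_const 0).comp_lipschitzOnWith (hu_lip.sub hW_lip)
  have hg_zero : ∀ x ∈ sphere y r, g x = 0 := fun x hx =>
    max_eq_right (sub_nonpos.2 (hu_sphere x hx))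
  have hg_int : IntegrableOn g (ball y r) μ :=
    (hg_lip.continuousOn.integrableOn_compact (isCompact_closedBall y r)).mono_set
      ball_subset_closedBall
  have hflux_int : IntegrableOn (fun x => c * inner ℝ (gradient g x) (x - y)) (ball y r) μ :=
    (integrableOn_ball_inner_gradient_sub hr hg_lip hg_zero).const_mul c
  have hpointwise : ∀ᵐ x ∂μ.restrict (ball y r), energyDensity p F v x ≤
      energyDensity p F u x - (c * inner ℝ (gradient g x) (x - y) + κ * g x) := by
    filter_upwards [ae_differentiableAt_ball_of_lipschitzOnWith hg_lip,
      ae_restrict_mem measurableSet_ball] with x hg_diff hx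
    exact energyDensity_min_radialBarrier_le hpq hc (hu_diff x hx) hg_diff (hF_slope x hx)
  have hv_nonneg : 0 ≤ᵐ[μ.restrict (ball y r)] energyDensity p F v := by
    filter_upwards [ae_restrict_mem measurableSet_ball] with x hx
    have := hpq.pos
    exact add_nonneg (by positivity) (hF_nonneg x hx)
  have hloss_int := hflux_int.add (hg_int.const_mul κ)
  calc ∫ x in ball y r, energyDensity p F v x ∂μ + (κ - finrank ℝ E * c) * ∫ x in ball y r, g x ∂μ
      = ∫ x in ball y r, energyDensity p F v x ∂μ +
          ∫ x in ball y r, (c * inner ℝ (gradient g x) (x - y) + κ * g x) ∂μ := by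
        rw [integral_add hflux_int (hg_int.const_mul κ), integral_const_mul, integral_const_mul,
          setIntegral_ball_inner_gradient_sub hr hg_lip hg_zero]
        ring
    _ ≤ ∫ x in ball y r, energyDensity p F u x ∂μ := by
        have hle := integral_mono_of_nonneg hv_nonneg (hu_int.sub hloss_int) hpointwise
        rw [integral_sub' hu_int hloss_int] at hle
        exact le_sub_iff_add_le.1 hle

end EnergyComparison

section Nondegeneracy

lemma setIntegral_ball_max_zero_pos {α : Type*} [MetricSpace α] [ProperSpace α]
    [MeasurableSpace α] [OpensMeasurableSpace α] {μ : Measure α} [μ.IsOpenPosMeasure]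
    [IsFiniteMeasureOnCompacts μ] {f : α → ℝ} {y : α} {r : ℝ} (hr : 0 < r)
    (hf : ContinuousOn f (closedBall y r)) (hy : 0 < f y) :
    0 < ∫ x in ball y r, max (f x) 0 ∂μ := by
  have hint : IntegrableOn (fun x => max (f x) 0) (ball y r) μ :=
    ((hf.sup continuousOn_const).integrableOn_compact (isCompact_closedBall y r)).mono_set
      ball_subset_closedBall
  rw [setIntegral_pos_iff_support_of_nonneg_ae (.of_forall fun x => le_max_right (f x) 0) hint]
  refine Measure.measure_pos_of_mem_nhds μ (x := y) (inter_mem ?_ (ball_mem_nhds y hr))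
  filter_upwards [(hf.continuousAt (closedBall_mem_nhds y hr)).eventually_const_lt hy] with x hx
  exact (lt_max_of_lt_left hx).ne'

section Slope

variable {F : ℝ → ℝ} {κ M a b t : ℝ}

lemma le_of_slope_le (hF : ∀ s t, 0 ≤ s → s ≤ t → t ≤ M → κ * (t - s) ≤ F t - F s)
    (hκ : 0 ≤ κ) (ht0 : 0 ≤ t) (htM : t ≤ M) : F 0 ≤ F t := by
  have hslope := hF 0 t le_rfl ht0 htM
  have : 0 ≤ κ * (t - 0) := mul_nonneg hκ (sub_nonneg.2 ht0)
  linarith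

lemma mul_max_sub_zero_le_sub_min
    (hF : ∀ s t, 0 ≤ s → s ≤ t → t ≤ M → κ * (t - s) ≤ F t - F s)
    (ha0 : 0 ≤ a) (haM : a ≤ M) (hb : 0 ≤ b) :
    κ * max (a - b) 0 ≤ F a - F (min a b) := by
  rw [← sub_self a, max_sub_sub_left, min_comm]
  exact hF _ _ (le_min ha0 hb) (min_le_left a b) haM

end Slope

namespace APLocMin

variable {N : ℕ} {p q c κ r : ℝ} {F : ℝ → ℝ} {Ω : Set (EuclideanSpace ℝ (Fin N))}
  {u : EuclideanSpace ℝ (Fin N) → ℝ} {y : EuclideanSpace ℝ (Fin N)}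

lemma continuousOn (hu : APLocMin N p F Ω u) : ContinuousOn u Ω := fun x hx =>
  (hu.1 x hx).continuousAt.continuousWithinAt

lemma exists_lipschitzOnWith_closedBall (hu : APLocMin N p F Ω u) (hball : closedBall y r ⊆ Ω) :
    ∃ K, LipschitzOnWith K u (closedBall y r) := by
  obtain ⟨C, hC⟩ := (isCompact_closedBall y r).exists_bound_of_continuousOn (hu.2.1.mono hball)
  refine ⟨C.toNNReal, (convex_closedBall y r).lipschitzOnWith_of_nnnorm_fderiv_le (𝕜 := ℝ)
    (fun x hx => hu.1 x (hball hx)) fun x hx => NNReal.le_toNNReal_of_coe_le ?_⟩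
  rw [coe_nnnorm, ← norm_gradient_eq_norm_fderiv]
  exact hC x hx

lemma integrableOn_energyDensity (hu : APLocMin N p F Ω u) (hp : 0 ≤ p)
    (hball : closedBall y r ⊆ Ω) {s : Set ℝ} (hF : ContinuousOn F s)
    (hus : MapsTo u (closedBall y r) s) :
    IntegrableOn (energyDensity p F u) (ball y r) := by
  have hcont : ContinuousOn (energyDensity p F u) (closedBall y r) :=
    (((hu.2.1.mono hball).norm.rpow_const fun _ _ => .inr hp).div_const p).add
      (hF.comp (hu.continuousOn.mono hball) hus)
  exact (hcont.integrableOn_compact (isCompact_closedBall y r)).mono_set ball_subset_closedBall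

/-- Otherwise `u` would lie below the barrier on the sphere, and cutting it down to the barrier
would strictly lower the energy. -/
lemma exists_barrier_lt (hu : APLocMin N p F Ω u) (hpq : p.HolderConjugate q) (hr : 0 < r)
    (hc : 0 ≤ c) (hκ : N * c < κ) (hball : closedBall y r ⊆ Ω)
    (hu_nonneg : ∀ x ∈ closedBall y r, 0 ≤ u x) (hy : 0 < u y) (hF0 : 0 ≤ F 0)
    (hF_cont : ContinuousOn F (Icc 0 (c ^ (q - 1) * r ^ q / q)))
    (hF_slope : ∀ s t, 0 ≤ s → s ≤ t → t ≤ c ^ (q - 1) * r ^ q / q → κ * (t - s) ≤ F t - F s) :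
    ∃ x ∈ closedBall y r, c ^ (q - 1) * r ^ q / q < u x := by
  by_contra! hu_le
  set W := radialBarrier q c y
  obtain ⟨K, hu_lip⟩ := hu.exists_lipschitzOnWith_closedBall hball
  obtain ⟨K', hW_lip⟩ := exists_lipschitzOnWith_radialBarrier (c := c) hpq.symm.lt y r
  have hW_nonneg : ∀ x, 0 ≤ W x := radialBarrier_nonneg hpq.symm.nonneg hc y
  have hu_sphere : ∀ x ∈ sphere y r, u x ≤ W x := fun x hx => by
    simpa only [W, radialBarrier, mem_sphere_iff_norm.1 hx] using
      hu_le x (sphere_subset_closedBall hx)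
  have hκ_nonneg : 0 ≤ κ := hκ.le.trans' (by positivity)
  have hF_nonneg : ∀ x ∈ ball y r, 0 ≤ F (min (u x) (W x)) := fun x hx =>
    have hx' := ball_subset_closedBall hx
    hF0.trans (le_of_slope_le hF_slope hκ_nonneg (le_min (hu_nonneg x hx') (hW_nonneg x))
      (min_le_of_left_le (hu_le x hx')))
  have hF_gap : ∀ x ∈ ball y r, κ * max (u x - W x) 0 ≤ F (u x) - F (min (u x) (W x)) :=
    fun x hx =>
      have hx' := ball_subset_closedBall hx
      mul_max_sub_zero_le_sub_min hF_slope (hu_nonneg x hx') (hu_le x hx') (hW_nonneg x)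
  have hcomparison := setIntegral_energyDensity_min_add_le (μ := volume) hpq hc hr.ne' hu_lip
    (fun x hx => hu.1 x (hball (ball_subset_closedBall hx))) hu_sphere
    (hu.integrableOn_energyDensity hpq.nonneg hball hF_cont fun x hx =>
      ⟨hu_nonneg x hx, hu_le x hx⟩) hF_nonneg hF_gap
  have hgap : 0 < ∫ x in ball y r, max (u x - W x) 0 :=
    setIntegral_ball_max_zero_pos hr (hu_lip.continuousOn.sub hW_lip.continuousOn)
      (by simpa [W, radialBarrier_self hpq.symm.ne_zero] using hy)
  have hminimal : ∫ x in ball y r, energyDensity p F u x ≤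
      ∫ x in ball y r, energyDensity p F (fun t => min (u t) (W t)) x := by
    rw [← closure_ball y hr.ne'] at hball hu_lip hW_lip
    exact hu.2.2.2 y r hr hball _ _ (lipschitzWith_min.comp_lipschitzOnWith (hu_lip.prodMk hW_lip))
      fun x hx => min_eq_left (hu_sphere x hx)
  rw [finrank_euclideanSpace_fin] at hcomparison
  linarith [mul_pos (sub_pos.2 hκ) hgap]

end APLocMin

end Nondegeneracy

section AltPhillipsPotential

variable {γ lp lm : ℝ}

lemma Fgam_of_nonneg (hγ : γ ≠ 0) {t : ℝ} (ht : 0 ≤ t) : Fgam γ lp lm t = lp * t ^ γ := by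
  simp [Fgam, ht, Real.zero_rpow hγ]

lemma continuous_Fgam (hγ : 0 ≤ γ) : Continuous (Fgam γ lp lm) :=
  (((continuous_id.max continuous_const).rpow_const fun _ => .inr hγ).const_mul lp).add
    (((continuous_neg.max continuous_const).rpow_const fun _ => .inr hγ).const_mul lm)

lemma mul_sub_le_Fgam_sub_Fgam (hγ0 : 0 < γ) (hγ1 : γ ≤ 1) (hlp : 0 ≤ lp) {s t M : ℝ}
    (hs : 0 ≤ s) (hst : s ≤ t) (htM : t ≤ M) :
    lp * (γ * M ^ (γ - 1)) * (t - s) ≤ Fgam γ lp lm t - Fgam γ lp lm s := by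
  rw [Fgam_of_nonneg hγ0.ne' (hs.trans hst), Fgam_of_nonneg hγ0.ne' hs, ← mul_sub, mul_assoc]
  exact mul_le_mul_of_nonneg_left
    (mul_rpow_sub_one_mul_sub_le_rpow_sub_rpow hγ0.le hγ1 hs hst htM) hlp

end AltPhillipsPotential

section Scaling

variable {p q γ ε r : ℝ}

/-- The exponent `1 + γ / (p - γ)` is the one for which the barrier of height `ε * r ^ (1 + τ)` on
the sphere of radius `r` has a `p`-Laplacian of the same order as the slope of `t ^ γ` there. -/
lemma barrier_coeff_eq (hpq : p.HolderConjugate q) (hγ : γ < p) (hε : 0 < ε) (hr : 0 < r) :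
    (q * (ε * r ^ (1 + γ / (p - γ))) * r ^ (-q)) ^ (p - 1) =
      q ^ (p - 1) * ε ^ (p - γ) * (ε * r ^ (1 + γ / (p - γ))) ^ (γ - 1) := by
  set M := ε * r ^ (1 + γ / (p - γ)) with hM
  have hM_pos : 0 < M := by positivity
  have hM_rpow : M ^ (p - γ) = ε ^ (p - γ) * r ^ p := by
    rw [hM, Real.mul_rpow hε.le (by positivity), ← Real.rpow_mul hr.le, one_add_mul,
      div_mul_cancel₀ _ (sub_pos.2 hγ).ne', sub_add_cancel]
  have hr_rpow : (r ^ (-q)) ^ (p - 1) = (r ^ p)⁻¹ := by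
    rw [← Real.rpow_mul hr.le, neg_mul, mul_comm, hpq.sub_one_mul_conj, Real.rpow_neg hr.le]
  have hsplit : M ^ (p - 1) = M ^ (p - γ) * M ^ (γ - 1) := by
    rw [← Real.rpow_add hM_pos, sub_add_sub_cancel]
  have hq := hpq.symm.nonneg
  rw [Real.mul_rpow (by positivity) (by positivity), Real.mul_rpow hq hM_pos.le, hsplit, hM_rpow,
    hr_rpow]
  field_simp

lemma barrier_height_eq (hpq : p.HolderConjugate q) (hr : 0 < r) {M : ℝ} (hM : 0 ≤ M) :
    ((q * M * r ^ (-q)) ^ (p - 1)) ^ (q - 1) * r ^ q / q = M := by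
  have hq := hpq.symm.pos
  have hinv : (p - 1) * (q - 1) = 1 := by linarith [hpq.sub_one_mul_conj, mul_sub_one (p - 1) q]
  rw [← Real.rpow_mul (by positivity), hinv, Real.rpow_one, Real.rpow_neg hr.le]
  field_simp

end Scaling

section PositivityBall

lemma pos_of_mem_ball_of_norm_gradient_le {E : Type*} [NormedAddCommGroup E]
    [InnerProductSpace ℝ E] [CompleteSpace E] {u : E → ℝ} {x t : E} {s G : ℝ} (hG : 0 ≤ G)
    (hu : ∀ w ∈ ball x s, DifferentiableAt ℝ u w) (hgrad : ∀ w ∈ ball x s, ‖gradient u w‖ ≤ G)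
    (hx : G * s < u x) (ht : t ∈ ball x s) : 0 < u t := by
  have hmean : ‖u t - u x‖ ≤ G * ‖t - x‖ :=
    (convex_ball x s).norm_image_sub_le_of_norm_fderiv_le hu
      (fun w hw => norm_gradient_eq_norm_fderiv u w ▸ hgrad w hw)
      (mem_ball_self (pos_of_mem_ball ht)) ht
  have hdist : G * ‖t - x‖ ≤ G * s :=
    mul_le_mul_of_nonneg_left (mem_ball_iff_norm.1 ht).le hG
  linarith [neg_le_of_abs_le hmean]

lemma eventually_nonneg_of_notMem_frontier {X α : Type*} [TopologicalSpace X] [LinearOrder α]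
    [Zero α] {Ω : Set X} {u : X → α} {z : X} (hpos : z ∈ closure {x ∈ Ω | 0 < u x})
    (hneg : z ∉ frontier {x ∈ Ω | u x < 0}) : ∀ᶠ x in 𝓝 z, x ∈ Ω → 0 ≤ u x := by
  have hclosure : z ∉ closure {x ∈ Ω | u x < 0} := by
    intro hz
    have hz_int : z ∈ interior {x ∈ Ω | u x < 0} := by_contra fun h => hneg ⟨hz, h⟩
    obtain ⟨x, hx_neg, hx_pos⟩ := mem_closure_iff_nhds.1 hpos _ (mem_interior_iff_mem_nhds.1 hz_int)
    exact hx_neg.2.not_gt hx_pos.2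
  filter_upwards [isClosed_closure.isOpen_compl.mem_nhds hclosure] with x hx hxΩ
  exact not_lt.1 fun hlt => hx (subset_closure ⟨hxΩ, hlt⟩)

lemma ofReal_pow_mul_addHaar_ball {E : Type*} [NormedAddCommGroup E] [NormedSpace ℝ E]
    [FiniteDimensional ℝ E] [MeasurableSpace E] [BorelSpace E] (μ : Measure E)
    [μ.IsAddHaarMeasure] {θ : ℝ} (hθ : 0 < θ) (x z : E) (R : ℝ) :
    ENNReal.ofReal (θ ^ finrank ℝ E) * μ (ball z R) = μ (ball x (θ * R)) := by
  rw [Measure.addHaar_ball_mul_of_pos μ x hθ, Measure.addHaar_ball_center μ z]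

namespace APLocMin

variable {N : ℕ} {p q γ lp lm ε θ L r R : ℝ} {Ω : Set (EuclideanSpace ℝ (Fin N))}
  {u : EuclideanSpace ℝ (Fin N) → ℝ} {y z : EuclideanSpace ℝ (Fin N)}

lemma exists_mul_rpow_lt (hu : APLocMin N p (Fgam γ lp lm) Ω u) (hpq : p.HolderConjugate q)
    (hγ0 : 0 < γ) (hγ1 : γ ≤ 1) (hlp : 0 ≤ lp) (hε : 0 < ε)
    (hε_small : N * q ^ (p - 1) * ε ^ (p - γ) < lp * γ) (hr : 0 < r)
    (hball : closedBall y r ⊆ Ω) (hu_nonneg : ∀ x ∈ closedBall y r, 0 ≤ u x) (hy : 0 < u y) :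
    ∃ x ∈ closedBall y r, ε * r ^ (1 + γ / (p - γ)) < u x := by
  set M := ε * r ^ (1 + γ / (p - γ)) with hM
  have hM_pos : 0 < M := by positivity
  have hq := hpq.symm.pos
  have hheight := barrier_height_eq hpq hr hM_pos.le
  have hslope : N * (q * M * r ^ (-q)) ^ (p - 1) < lp * (γ * M ^ (γ - 1)) := by
    rw [hM, barrier_coeff_eq hpq (hγ1.trans_lt hpq.lt) hε hr, ← hM, ← mul_assoc, ← mul_assoc,
      ← mul_assoc]
    gcongr
  have hbarrier := hu.exists_barrier_lt hpq hr (by positivity) hslope hball hu_nonneg hy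
    (by simp [Fgam, Real.zero_rpow hγ0.ne']) (continuous_Fgam hγ0.le).continuousOn
    fun s t hs hst htM => mul_sub_le_Fgam_sub_Fgam hγ0 hγ1 hlp hs hst (hheight ▸ htM)
  rwa [hheight] at hbarrier

lemma exists_ball_subset_pos (hu : APLocMin N p (Fgam γ lp lm) Ω u) (hpq : p.HolderConjugate q)
    (hγ0 : 0 < γ) (hγ1 : γ ≤ 1) (hlp : 0 ≤ lp) (hε : 0 < ε)
    (hε_small : N * q ^ (p - 1) * ε ^ (p - γ) < lp * γ) (hL : 0 ≤ L) (hθ : θ ≤ 1 / 2)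
    (hθL : L * θ ≤ ε * (1 / 4) ^ (1 + γ / (p - γ))) (hR : 0 < R) (hball : ball z R ⊆ Ω)
    (hu_nonneg : ∀ x ∈ ball z R, 0 ≤ u x)
    (hgrad : ∀ x ∈ ball z R, ‖gradient u x‖ ≤ L * R ^ (γ / (p - γ)))
    (hz : z ∈ closure {x ∈ Ω | 0 < u x}) :
    ∃ x, ball x (θ * R) ⊆ {x ∈ Ω | 0 < u x} ∩ ball z R := by
  set τ := γ / (p - γ)
  obtain ⟨y, ⟨hyΩ, hy_pos⟩, hyz⟩ := Metric.mem_closure_iff.1 hz (R / 4) (by positivity)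
  rw [dist_comm] at hyz
  have hsub_y : closedBall y (R / 4) ⊆ ball z R :=
    closedBall_subset_ball' (by linarith)
  obtain ⟨x, hxy, hx⟩ := hu.exists_mul_rpow_lt hpq hγ0 hγ1 hlp hε hε_small (by positivity)
    (hsub_y.trans hball) (fun x hx => hu_nonneg x (hsub_y hx)) hy_pos
  have hsub_x : ball x (θ * R) ⊆ ball z R := by
    refine ball_subset_ball' ?_
    have : θ * R ≤ 1 / 2 * R := by gcongr
    linarith [dist_triangle x y z, mem_closedBall.1 hxy]
  have hlarge : L * R ^ τ * (θ * R) < u x := by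
    calc L * R ^ τ * (θ * R) = L * θ * R ^ (1 + τ) := by
          rw [add_comm, Real.rpow_add_one hR.ne']
          ring
      _ ≤ ε * (1 / 4) ^ (1 + τ) * R ^ (1 + τ) := by gcongr
      _ = ε * (R / 4) ^ (1 + τ) := by
          rw [mul_assoc, ← Real.mul_rpow (by norm_num) hR.le, one_div_mul_eq_div]
      _ < u x := hx
  refine ⟨x, fun t ht => ⟨⟨hball (hsub_x ht), ?_⟩, hsub_x ht⟩⟩
  exact pos_of_mem_ball_of_norm_gradient_le (by positivity)
    (fun w hw => hu.1 w (hball (hsub_x hw))) (fun w hw => hgrad w (hsub_x hw)) hlarge ht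

end APLocMin

end PositivityBall

theorem stmt16_general (N : ℕ) (hN : 1 ≤ N) (p γ lp L : ℝ) (hp : 1 < p) (hγ0 : 0 < γ)
    (hγ1 : γ ≤ 1) (hlp : 0 < lp) (hL : 0 < L) :
    ∃ c₁ : ℝ, c₁ ∈ Set.Ioo (0 : ℝ) 1 ∧
      ∀ lm : ℝ, ∀ Ω : Set (EuclideanSpace ℝ (Fin N)),
      ∀ u : EuclideanSpace ℝ (Fin N) → ℝ, APLocMin N p (Fgam γ lp lm) Ω u →
      ∀ z : EuclideanSpace ℝ (Fin N),
        z ∈ closure {x ∈ Ω | 0 < u x} → z ∉ frontier {x ∈ Ω | u x < 0} →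
      ∀ ρ₀ : ℝ, 0 < ρ₀ → Metric.ball z ρ₀ ⊆ Ω →
        (∀ r : ℝ, 0 < r → r < ρ₀ / 2 → ∀ x ∈ Metric.ball z r,
          ‖gradient u x‖ ≤ L * r ^ (γ / (p - γ))) →
      ∃ ρ₁ : ℝ, 0 < ρ₁ ∧ ρ₁ < ρ₀ ∧
        ∀ r : ℝ, 0 < r → r < ρ₁ →
          ENNReal.ofReal c₁ * volume (Metric.ball z r) ≤
            volume ({x ∈ Ω | 0 < u x} ∩ Metric.ball z r) := by
  have hpq : p.HolderConjugate p.conjExponent := .conjExponent hp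
  obtain ⟨ε, hε, hε_small⟩ := exists_pos_mul_rpow_lt (N * p.conjExponent ^ (p - 1))
    (mul_pos hlp hγ0) (sub_pos.2 (hγ1.trans_lt hp))
  set θ := min (1 / 2) (ε * (1 / 4) ^ (1 + γ / (p - γ)) / L)
  have hθ_pos : 0 < θ := by positivity
  have hθ_le : θ ≤ 1 / 2 := min_le_left _ _
  have hθL : L * θ ≤ ε * (1 / 4) ^ (1 + γ / (p - γ)) := (le_div_iff₀' hL).1 (min_le_right _ _)
  refine ⟨θ ^ N, ⟨by positivity, pow_lt_one₀ hθ_pos.le (by linarith) (by lia)⟩, ?_⟩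
  intro lm Ω u hu z hz_pos hz_neg ρ₀ hρ₀ hball hgrad
  obtain ⟨δ, hδ, hu_nonneg⟩ := Metric.eventually_nhds_iff_ball.1
    (eventually_nonneg_of_notMem_frontier hz_pos hz_neg)
  refine ⟨min δ (ρ₀ / 2), by positivity, (min_le_right _ _).trans_lt (by linarith), ?_⟩
  intro R hR hR_lt
  obtain ⟨hRδ, hRρ⟩ := lt_min_iff.1 hR_lt
  have hballR : ball z R ⊆ Ω := (ball_subset_ball (by linarith)).trans hball
  obtain ⟨x, hx⟩ := hu.exists_ball_subset_pos hpq hγ0 hγ1 hlp.le hε hε_small hL.le hθ_le hθL hR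
    hballR (fun x hx => hu_nonneg x (ball_subset_ball hRδ.le hx) (hballR hx))
    (hgrad R hR hRρ) hz_pos
  calc ENNReal.ofReal (θ ^ N) * volume (ball z R) = volume (ball x (θ * R)) := by
        simpa using ofReal_pow_mul_addHaar_ball volume hθ_pos x z R
    _ ≤ volume ({x ∈ Ω | 0 < u x} ∩ ball z R) := measure_mono hx

/-- Lower Lebesgue density estimate for the positive phase at a one-phase free
boundary point, assuming growth and interior Lipschitz estimates. -/
theorem stmt16 (N : ℕ) (hN : 1 ≤ N) (p γ lp C₂ L : ℝ)
    (hp : 1 < p) (hγ0 : 0 < γ) (hγ1 : γ ≤ 1) (hγp : γ < p)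
    (hlp : 0 < lp) (hC₂ : 0 < C₂) (hL : 0 < L) :
    ∃ c₁ : ℝ, c₁ ∈ Set.Ioo (0 : ℝ) 1 ∧
      ∀ lm : ℝ, 0 < lm →
      ∀ (Ω : Set (EuclideanSpace ℝ (Fin N))), IsOpen Ω → Bornology.IsBounded Ω →
      ∀ u : EuclideanSpace ℝ (Fin N) → ℝ, APLocMin N p (Fgam γ lp lm) Ω u →
      ∀ z : EuclideanSpace ℝ (Fin N), z ∈ Ω →
        z ∈ frontier {x ∈ Ω | 0 < u x} → z ∉ frontier {x ∈ Ω | u x < 0} →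
      ∀ ρ₀ : ℝ, 0 < ρ₀ → Metric.ball z ρ₀ ⊆ Ω →
        (∀ r : ℝ, 0 < r → r < ρ₀ → ∀ x ∈ Metric.ball z r,
          |u x| ≤ C₂ * r ^ (1 + γ / (p - γ))) →
        (∀ r : ℝ, 0 < r → r < ρ₀ / 2 → ∀ y ∈ Metric.ball z r,
          ∀ x ∈ Metric.ball y (r / 2), ‖gradient u x‖ ≤ L * r ^ (γ / (p - γ))) →
      ∃ ρ₁ : ℝ, 0 < ρ₁ ∧ ρ₁ < ρ₀ ∧
        ∀ r : ℝ, 0 < r → r < ρ₁ →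
          ENNReal.ofReal c₁ * volume (Metric.ball z r) ≤
            volume ({x ∈ Ω | 0 < u x} ∩ Metric.ball z r) := by
  obtain ⟨c₁, hc₁, hdensity⟩ := stmt16_general N hN p γ lp L hp hγ0 hγ1 hlp hL
  exact ⟨c₁, hc₁, fun lm _ Ω _ _ u hu z _ hz_pos hz_neg ρ₀ hρ₀ hball _ hgrad =>
    hdensity lm Ω u hu z hz_pos.1 hz_neg ρ₀ hρ₀ hball fun r hr hrρ x hx =>
      hgrad r hr hrρ x hx x (mem_ball_self (half_pos hr))⟩
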